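/- Let p be a prime and let n ≥ 0 and μ ≥ 0 be integers. Then P(n+1, p^μ) ≤ P(n, p^μ) ≤ P(n, p^{μ+1}). -/

import Mathlib

/-- Number of symmetric `n × n` matrices over `ZMod m` with nonzero determinant. -/
noncomputable def Nsym (n m : ℕ) : ℕ :=
  Nat.card {A : Matrix (Fin n) (Fin n) (ZMod m) // A.IsSymm ∧ A.det ≠ 0}

/-- Proportion of symmetric `n × n` matrices over `ZMod m` with nonzero determinant. -/
noncomputable def Psym (n m : ℕ) : ℝ :=
  (Nsym n m : ℝ) / (m : ℝ) ^ (n * (n + 1) / 2)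

open Finset Matrix

section Pattern

variable {R : Type*} [CommRing R] [Fintype R] {ι κ δ : Type*} [Fintype ι] [Fintype κ] [Fintype δ]

open Classical in
/-- The symmetric matrices satisfying `Φ` whose entries indexed by `S × S` lie in `I`. -/
noncomputable def symFinset (I : Ideal R) (S : ι → Prop) (Φ : Matrix ι ι R → Prop) :
    Finset (Matrix ι ι R) :=
  {M | (M.IsSymm ∧ ∀ i j, S i → S j → M i j ∈ I) ∧ Φ M}

theorem mem_symFinset {I : Ideal R} {S : ι → Prop} {Φ : Matrix ι ι R → Prop} {M : Matrix ι ι R} :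
    M ∈ symFinset I S Φ ↔ (M.IsSymm ∧ ∀ i j, S i → S j → M i j ∈ I) ∧ Φ M := by
  simp [symFinset]

theorem card_symFinset_true_pos (I : Ideal R) (S : ι → Prop) :
    0 < #(symFinset I S fun _ => True) :=
  card_pos.2 ⟨0, mem_symFinset.2 ⟨⟨isSymm_zero, fun _ _ _ _ => I.zero_mem⟩, trivial⟩⟩

/-- The proportion of matrices with nonzero determinant among the symmetric matrices whose entries
indexed by `S × S` lie in `I`. -/
noncomputable def symDens [DecidableEq ι] (I : Ideal R) (S : ι → Prop) : ℝ :=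
  #(symFinset I S fun M => M.det ≠ 0) / #(symFinset I S fun _ => True)

theorem card_symFinset_det_ne_zero [DecidableEq ι] (I : Ideal R) (S : ι → Prop) :
    (#(symFinset I S fun M => M.det ≠ 0) : ℝ) =
      symDens I S * #(symFinset I S fun _ => True) := by
  have := card_symFinset_true_pos I S
  rw [symDens, div_mul_cancel₀]
  positivity

theorem card_symFinset_reindex (e : κ ≃ ι) (I : Ideal R) (S : ι → Prop)
    (Φ : Matrix ι ι R → Prop) :
    #(symFinset I S Φ) =
      #(symFinset I (S ∘ e) fun M : Matrix κ κ R => Φ (M.submatrix e.symm e.symm)) := by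
  refine card_nbij' (fun M => M.submatrix e e) (fun M => M.submatrix e.symm e.symm) ?_ ?_ ?_ ?_
  · intro M hM
    simp only [SetLike.mem_coe, mem_symFinset] at hM ⊢
    exact ⟨⟨hM.1.1.submatrix e, fun i j hi hj => hM.1.2 _ _ hi hj⟩, by simpa using hM.2⟩
  · intro M hM
    simp only [SetLike.mem_coe, mem_symFinset] at hM ⊢
    exact ⟨⟨hM.1.1.submatrix _, fun i j hi hj => hM.1.2 _ _ (by simpa) (by simpa)⟩, hM.2⟩
  · intro M _; simp
  · intro M _; simp

theorem symDens_reindex [DecidableEq ι] [DecidableEq κ] (e : κ ≃ ι) (I : Ideal R)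
    (S : ι → Prop) : symDens I S = symDens I (S ∘ e) := by
  simp only [symDens]
  rw [card_symFinset_reindex e, card_symFinset_reindex e I S fun _ => True]
  simp only [det_submatrix_equiv_self]

/-- The symmetric matrix obtained from `E` by adding a first row and column `(a, w)`. -/
def bordered (a : R) (w : κ → R) (E : Matrix κ κ R) : Matrix (Unit ⊕ κ) (Unit ⊕ κ) R :=
  fromBlocks (of fun _ _ => a) (of fun _ j => w j) (of fun i _ => w i) E

theorem card_symFinset_sum_unit (I : Ideal R) (b : Prop) (S : κ → Prop)
    (Φ : Matrix (Unit ⊕ κ) (Unit ⊕ κ) R → Prop) {s : Finset (R × (κ → R))}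
    (hs : ∀ x, x ∈ s ↔ (b → x.1 ∈ I ∧ ∀ k, S k → x.2 k ∈ I)) :
    #(symFinset I (Sum.elim (fun _ => b) S) Φ) =
      ∑ x ∈ s, #(symFinset I S fun E => Φ (bordered x.1 x.2 E)) := by
  classical
  rw [card_eq_sum_card_fiberwise (t := s)
    (f := fun M => ((M (.inl ()) (.inl ()), fun k => M (.inr k) (.inl ())) : R × (κ → R)))]
  · refine sum_congr rfl fun x hx => ?_
    rw [hs] at hx
    refine card_nbij' (fun M => M.toBlocks₂₂) (fun E => bordered x.1 x.2 E) ?_ ?_ ?_ ?_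
    all_goals
      intro M hM
      simp only [coe_filter, SetLike.mem_coe, Set.mem_ofPred_eq, mem_symFinset] at hM ⊢
    · obtain ⟨⟨⟨hs, hI⟩, hΦ⟩, rfl⟩ := hM
      refine ⟨⟨IsSymm.ext fun i j => hs.apply _ _, fun i j hi hj => hI _ _ hi hj⟩, ?_⟩
      convert hΦ
      ext (i | i) (j | j) <;> simp [bordered, toBlocks₂₂]
      exact hs.apply _ _
    · obtain ⟨⟨hs, hI⟩, hΦ⟩ := hM
      refine ⟨⟨⟨IsSymm.fromBlocks (IsSymm.ext fun _ _ => rfl) rfl hs, ?_⟩, hΦ⟩, rfl⟩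
      rintro (i | i) (j | j) hi hj
      · exact (hx hi).1
      · exact (hx hi).2 _ hj
      · exact (hx hj).2 _ hi
      · exact hI _ _ hi hj
    · obtain ⟨⟨⟨hs, hI⟩, hΦ⟩, rfl⟩ := hM
      ext (i | i) (j | j) <;> simp [bordered, toBlocks₂₂]
      exact hs.apply _ _
    · rfl
  · intro M hM
    simp only [SetLike.mem_coe, mem_symFinset, hs] at hM ⊢
    exact fun hb => ⟨hM.1.2 _ _ hb hb, fun k hk => hM.1.2 _ _ hk hb⟩

theorem card_symFinset_schur [DecidableEq κ] [DecidableEq δ] (I : Ideal R) (S : κ → Prop)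
    {D X : Matrix δ δ R} (hX : D * X = 1) (B : Matrix δ κ R) (C : Matrix κ δ R)
    (hs : (C * X * B).IsSymm) (hI : ∀ i j, S i → S j → (C * X * B) i j ∈ I) :
    #(symFinset I S fun E => (fromBlocks D B C E).det ≠ 0) =
      #(symFinset I S fun E => E.det ≠ 0) := by
  let := invertibleOfRightInverse D X hX
  have hD : IsUnit D.det := (isUnit_iff_isUnit_det D).1 (isUnit_of_invertible D)
  have key (E : Matrix κ κ R) :
      (fromBlocks D B C E).det ≠ 0 ↔ (E - C * X * B).det ≠ 0 := by
    rw [det_fromBlocks₁₁, Ne, hD.mul_right_eq_zero]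
    rfl
  refine card_nbij' (fun E => E - C * X * B) (fun E => E + C * X * B) ?_ ?_ ?_ ?_
  · intro E hE
    simp only [SetLike.mem_coe, mem_symFinset, key] at hE ⊢
    exact ⟨⟨hE.1.1.sub hs, fun i j hi hj => I.sub_mem (hE.1.2 i j hi hj) (hI i j hi hj)⟩, hE.2⟩
  · intro E hE
    simp only [SetLike.mem_coe, mem_symFinset, key] at hE ⊢
    exact ⟨⟨hE.1.1.add hs, fun i j hi hj => I.add_mem (hE.1.2 i j hi hj) (hI i j hi hj)⟩,
      by simpa using hE.2⟩
  · intro E _; simp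
  · intro E _; simp

theorem card_symFinset_bordered_of_isUnit [DecidableEq κ] (I : Ideal R) (S : κ → Prop)
    {a : R} (ha : IsUnit a) {w : κ → R} (hw : ∀ k, S k → w k ∈ I) :
    #(symFinset I S fun E => (bordered a w E).det ≠ 0) =
      #(symFinset I S fun E => E.det ≠ 0) := by
  obtain ⟨b, hb⟩ := ha.exists_right_inv
  refine card_symFinset_schur I S (X := of fun _ _ => b) ?_ _ _ ?_ ?_
  · ext i j
    simp [mul_apply, hb]
  · refine IsSymm.ext fun i j => ?_
    simp [mul_apply]
    ring
  · intro i j hi hj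
    simpa [mul_apply] using I.mul_mem_left _ (hw j hj)

theorem card_symFinset_bordered_bordered [DecidableEq κ] (I : Ideal R) (S : κ → Prop)
    {a c d : R} {w y : κ → R} (hd : IsUnit (a * c - d * d)) (hc : c ∈ I)
    (hy : ∀ k, S k → y k ∈ I) :
    #(symFinset I S fun E => (bordered a (Sum.elim (fun _ => d) w) (bordered c y E)).det ≠ 0) =
      #(symFinset I S fun E => E.det ≠ 0) := by
  obtain ⟨u, hu⟩ := hd.exists_right_inv
  have key (E : Matrix κ κ R) :
      (bordered a (Sum.elim (fun _ => d) w) (bordered c y E)).det =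
        (fromBlocks
          (fromBlocks (of fun _ _ => a) (of fun _ _ => d) (of fun _ _ => d) (of fun _ _ => c) :
            Matrix (Unit ⊕ Unit) (Unit ⊕ Unit) R)
          (of (Sum.elim (fun _ => w) fun _ => y))
          (of fun k => Sum.elim (fun _ => w k) fun _ => y k) E).det := by
    rw [← det_submatrix_equiv_self (Equiv.sumAssoc Unit Unit κ)]
    congr 1
    ext ((i | i) | i) ((j | j) | j) <;> simp [bordered]
  simp only [key]
  refine card_symFinset_schur I S (X := fromBlocks (of fun _ _ => u * c) (of fun _ _ => -(u * d))
    (of fun _ _ => -(u * d)) (of fun _ _ => u * a)) ?_ _ _ ?_ ?_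
  · ext (i | i) (j | j) <;> simp [mul_apply] <;> grind
  · refine IsSymm.ext fun i j => ?_
    simp [mul_apply]
    ring
  · intro i j hi hj
    have h : u * c * w i * w j - u * d * w i * y j - u * d * w j * y i + u * a * y i * y j ∈ I := by
      refine I.add_mem (I.sub_mem (I.sub_mem ?_ ?_) ?_) ?_
      · exact I.mul_mem_right _ (I.mul_mem_right _ (I.mul_mem_left _ hc))
      · exact I.mul_mem_left _ (hy j hj)
      · exact I.mul_mem_left _ (hy i hi)
      · exact I.mul_mem_left _ (hy j hj)
    convert h using 1
    simp [mul_apply]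
    ring

theorem card_symFinset_bordered_of_notMem [DecidableEq κ] {I : Ideal R}
    (hI : ∀ x ∉ I, IsUnit x) (S : κ → Prop) (a : R) {w : κ → R} {i : κ} (hi : S i)
    (hw : w i ∉ I) :
    (#(symFinset I S fun E => (bordered a w E).det ≠ 0) : ℝ) =
      symDens I (fun j : {j // j ≠ i} => S j) * #(symFinset I S fun _ => True) := by
  classical
  let e : Unit ⊕ {j // j ≠ i} ≃ κ :=
    { toFun := Sum.elim (fun _ => i) Subtype.val
      invFun := fun j => if h : j = i then .inl () else .inr ⟨j, h⟩
      left_inv := by rintro (j | ⟨j, hj⟩) <;> simp_all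
      right_inv := fun j => by by_cases h : j = i <;> simp [h] }
  have hS : S ∘ e = Sum.elim (fun _ => True) fun j : {j // j ≠ i} => S j := by
    ext (j | j) <;> simp [e, hi]
  have hdet (M : Matrix (Unit ⊕ {j // j ≠ i}) (Unit ⊕ {j // j ≠ i}) R) :
      (bordered a w (M.submatrix e.symm e.symm)).det =
        (bordered a (Sum.elim (fun _ => w i) fun j : {j // j ≠ i} => w j) M).det := by
    rw [← det_submatrix_equiv_self (Equiv.sumCongr (Equiv.refl Unit) e)]
    congr 1
    ext (j | j | ⟨j, hj⟩) (k | k | ⟨k, hk⟩) <;> simp_all [bordered, e]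
  rw [card_symFinset_reindex e, card_symFinset_reindex e I S fun _ => True, hS]
  simp only [hdet]
  have hs (x : R × ({j // j ≠ i} → R)) :
      x ∈ ({x | x.1 ∈ I ∧ ∀ j : {j // j ≠ i}, S j → x.2 j ∈ I} : Finset (R × ({j // j ≠ i} → R))) ↔
        (True → x.1 ∈ I ∧ ∀ j : {j // j ≠ i}, S j → x.2 j ∈ I) := by
    simp
  rw [card_symFinset_sum_unit _ _ _ _ hs, card_symFinset_sum_unit _ _ _ _ hs, Nat.cast_sum, Nat.cast_sum, mul_sum]
  refine sum_congr rfl fun x hx => ?_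
  simp only [mem_filter, mem_univ, true_and] at hx
  rw [card_symFinset_bordered_bordered I _ (hI _ fun h => hw ?_) hx.1 hx.2,
    card_symFinset_det_ne_zero]
  have h2 : w i * w i ∈ I := by
    simpa using I.sub_mem (I.mul_mem_left a hx.1) h
  exact (I.unit_mul_mem_iff_mem (hI _ hw)).1 h2

open Classical in
theorem card_filter_forall_mem [DecidableEq κ] (I : Ideal R) (S : κ → Prop) :
    (#{w : κ → R | ∀ k, S k → w k ∈ I} : ℝ) =
      (#{a : R | a ∈ I} / Fintype.card R : ℝ) ^ Nat.card {k // S k} *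
        (Fintype.card R : ℝ) ^ Fintype.card κ := by
  have h : ({w : κ → R | ∀ k, S k → w k ∈ I} : Finset _) =
      Fintype.piFinset fun k => if S k then ({a : R | a ∈ I} : Finset R) else univ := by
    ext w
    simp only [mem_filter, mem_univ, true_and, Fintype.mem_piFinset]
    refine forall_congr' fun k => ?_
    by_cases hk : S k <;> simp [hk]
  have hR : (Fintype.card R : ℝ) ≠ 0 := by simp
  rw [h, Fintype.card_piFinset, ← Finset.card_univ (α := κ), ← prod_const (Fintype.card R : ℝ),
    Nat.card_eq_fintype_card, Fintype.card_subtype, ← prod_const, prod_filter, ← prod_mul_distrib]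
  push_cast
  refine prod_congr rfl fun k _ => ?_
  by_cases hk : S k <;> simp [hk]

open Classical in
theorem symDens_sum_unit [DecidableEq κ] {I : Ideal R}
    (hI : ∀ x ∉ I, IsUnit x) (S : κ → Prop) {q d : ℝ}
    (hq : q = #{a : R | a ∈ I} / Fintype.card R)
    (hd : ∀ i, S i → symDens I (fun j : {j // j ≠ i} => S j) = d) :
    symDens I (Sum.elim (fun _ : Unit => False) S) =
      (1 - q ^ Nat.card {k // S k}) * d +
        q ^ Nat.card {k // S k} * ((1 - q) * symDens I S +
          q * symDens I (Sum.elim (fun _ : Unit => True) S)) := by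
  set r := Nat.card {k // S k}
  set J : Finset R := {a : R | a ∈ I} with hJ
  set W : Finset (κ → R) := {w : κ → R | ∀ k, S k → w k ∈ I} with hW
  set T := ((#(symFinset I S fun _ => True) : ℕ) : ℝ) with hT
  set m := ((Fintype.card R : ℕ) : ℝ) with hm
  set M : ℝ := m ^ Fintype.card κ with hM
  have hm0 : 0 < m := by simp [hm, Fintype.card_pos]
  have hM0 : 0 < M := by positivity
  have hT0 : 0 < T := by simpa [hT] using card_symFinset_true_pos I S
  have hJ0 : 0 < (#J : ℝ) := by
    exact_mod_cast card_pos.2 ⟨0, by simp [hJ]⟩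
  have hWc : (#W : ℝ) = q ^ r * M := by
    rw [hq]
    exact card_filter_forall_mem I S
  have hJc : (#J : ℝ) = q * m := by
    rw [hq]
    field_simp
  have hq0 : 0 < q := hq ▸ div_pos hJ0 hm0
  have hJW (x : R × (κ → R)) :
      x ∈ J ×ˢ W ↔ (True → x.1 ∈ I ∧ ∀ k, S k → x.2 k ∈ I) := by
    rw [mem_product]
    simp [hJ, hW]
  have huniv (x : R × (κ → R)) :
      x ∈ univ ×ˢ univ ↔ (False → x.1 ∈ I ∧ ∀ k, S k → x.2 k ∈ I) := by
    simp
  have htrue : (#(symFinset I (Sum.elim (fun _ : Unit => True) S) fun _ => True) : ℝ) =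
      #J * #W * T := by
    rw [card_symFinset_sum_unit _ _ _ _ hJW]
    simp [T]
  have hfalse : (#(symFinset I (Sum.elim (fun _ : Unit => False) S) fun _ => True) : ℝ) =
      m * M * T := by
    rw [card_symFinset_sum_unit _ _ _ _ huniv]
    simp [T, m, M]
  have hN : (#(symFinset I (Sum.elim (fun _ : Unit => True) S) fun M => M.det ≠ 0) : ℝ) =
      ∑ x ∈ J ×ˢ W, (#(symFinset I S fun E => (bordered x.1 x.2 E).det ≠ 0) : ℝ) := by
    rw [card_symFinset_sum_unit _ _ _ _ hJW, Nat.cast_sum]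
  have hsplit : (#(symFinset I (Sum.elim (fun _ : Unit => False) S) fun M => M.det ≠ 0) : ℝ) =
      m * (M - #W) * (d * T) + (m - #J) * #W * (symDens I S * T) +
        symDens I (Sum.elim (fun _ : Unit => True) S) * (#J * #W * T) := by
    rw [← htrue, ← card_symFinset_det_ne_zero I (Sum.elim _ _), hN,
      card_symFinset_sum_unit _ _ _ _ huniv, Nat.cast_sum]
    have h1 : ∑ x ∈ univ ×ˢ Wᶜ, (#(symFinset I S fun E => (bordered x.1 x.2 E).det ≠ 0) : ℝ) =
        m * (M - #W) * (d * T) := by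
      rw [sum_congr rfl (g := fun _ => d * T)]
      · rw [sum_const, nsmul_eq_mul, card_product, card_compl, Nat.cast_mul,
          Nat.cast_sub (card_le_univ _)]
        simp [m, M]
      · intro x hx
        simp only [hW, mem_product, mem_univ, mem_compl, mem_filter, true_and, not_forall] at hx
        obtain ⟨i, hi, hwi⟩ := hx
        rw [card_symFinset_bordered_of_notMem hI S x.1 hi hwi, hd i hi]
    have h2 : ∑ x ∈ Jᶜ ×ˢ W, (#(symFinset I S fun E => (bordered x.1 x.2 E).det ≠ 0) : ℝ) =
        (m - #J) * #W * (symDens I S * T) := by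
      rw [sum_congr rfl (g := fun _ => symDens I S * T)]
      · rw [sum_const, nsmul_eq_mul, card_product, card_compl, Nat.cast_mul,
          Nat.cast_sub (card_le_univ _)]
      · intro x hx
        simp only [hW, hJ, mem_product, mem_univ, mem_compl, mem_filter, true_and] at hx
        rw [card_symFinset_bordered_of_isUnit I S (hI _ hx.1) hx.2, card_symFinset_det_ne_zero]
    rw [← h1, ← h2, sum_product_right, sum_product_right, sum_product_right,
      sum_product_right, add_assoc, ← sum_add_distrib, ← sum_compl_add_sum W]
    simp only [sum_compl_add_sum]
  rw [symDens, hsplit, hfalse, hWc, hJc]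
  field_simp
  ring

end Pattern

section Recursion

variable {R : Type*} [CommRing R] [Fintype R] {ι κ : Type*} [Fintype ι] [Fintype κ]

theorem symDens_congr_card [DecidableEq ι] [DecidableEq κ] (I : Ideal R) {S : ι → Prop}
    {S' : κ → Prop} (h : Nat.card {i // S i} = Nat.card {k // S' k})
    (hc : Nat.card ι = Nat.card κ) :
    symDens I S = symDens I S' := by
  classical
  simp only [Nat.card_eq_fintype_card] at h hc
  have h' : Fintype.card {i // ¬ S i} = Fintype.card {k // ¬ S' k} := by
    rw [Fintype.card_subtype_compl, Fintype.card_subtype_compl, h, hc]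
  let e : κ ≃ ι := (Equiv.sumCompl S').symm.trans
    ((Equiv.sumCongr (Fintype.equivOfCardEq h.symm) (Fintype.equivOfCardEq h'.symm)).trans
      (Equiv.sumCompl S))
  rw [symDens_reindex e]
  congr 1
  ext k
  by_cases hk : S' k
  · simp [e, hk, Subtype.prop]
  · simp only [hk, iff_false]
    simpa [e, hk] using (Fintype.equivOfCardEq h'.symm ⟨k, hk⟩).2

theorem card_subtype_sum (S : ι ⊕ κ → Prop) :
    Nat.card {x // S x} = Nat.card {i // S (.inl i)} + Nat.card {k // S (.inr k)} := by
  rw [Nat.card_congr Equiv.subtypeSum, Nat.card_sum]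

/-- The density `symDens` for a pattern with `r` indices in the distinguished block and `n` indices
outside of it. -/
noncomputable def blockDens (I : Ideal R) (n r : ℕ) : ℝ :=
  symDens I fun x : Fin r ⊕ Fin n => x.isLeft = true

theorem card_isLeft (n r : ℕ) : Nat.card {x : Fin r ⊕ Fin n // x.isLeft = true} = r := by
  rw [card_subtype_sum]
  simp

theorem symDens_eq_blockDens [DecidableEq ι] (I : Ideal R) {S : ι → Prop} {n r : ℕ}
    (hr : Nat.card {i // S i} = r) (hn : Nat.card ι = n + r) :
    symDens I S = blockDens I n r :=
  symDens_congr_card I (hr.trans (card_isLeft n r).symm) (by rw [hn]; simp [add_comm])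

open Classical in
theorem blockDens_succ {I : Ideal R} (hI : ∀ x ∉ I, IsUnit x) {q : ℝ}
    (hq : q = #{a : R | a ∈ I} / Fintype.card R) (n r : ℕ) :
    blockDens I (n + 1) r = (1 - q ^ r) * blockDens I n (r - 1) +
      q ^ r * ((1 - q) * blockDens I n r + q * blockDens I n (r + 1)) := by
  have h := symDens_sum_unit hI (fun x : Fin r ⊕ Fin n => x.isLeft = true) hq
    (d := blockDens I n (r - 1)) ?_
  · rw [card_isLeft, symDens_eq_blockDens (n := n + 1) (r := r) I ?_ ?_,
      symDens_eq_blockDens (S := Sum.elim _ _) (n := n) (r := r + 1) I ?_ ?_] at h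
    · exact h
    · rw [card_subtype_sum, Nat.add_comm]
      simp only [Sum.elim_inl, Sum.elim_inr, card_isLeft]
      simp
    · simp; ring
    · rw [card_subtype_sum]
      simp only [Sum.elim_inl, Sum.elim_inr, card_isLeft]
      simp
    · simp; ring
  · rintro (i | i) hi
    · obtain ⟨r, rfl⟩ : ∃ s, r = s + 1 := ⟨r - 1, by have := i.2; omega⟩
      refine symDens_eq_blockDens I ?_ ?_
      · rw [Nat.card_congr (Equiv.subtypeSubtypeEquivSubtypeInter (· ≠ Sum.inl i)
          (Sum.isLeft · = true)), card_subtype_sum]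
        simp
      · simp; omega
    · simp at hi

theorem blockDens_antitone {I : Ideal R} (hI : ∀ x ∉ I, IsUnit x)
    (h0 : ∀ r, blockDens I 0 (r + 1) ≤ blockDens I 0 r) (n r : ℕ) :
    blockDens I n (r + 1) ≤ blockDens I n r ∧ blockDens I (n + 1) 0 ≤ blockDens I n 0 := by
  classical
  obtain ⟨q, hq⟩ : ∃ q : ℝ, q = #{a : R | a ∈ I} / Fintype.card R := ⟨_, rfl⟩
  have hq0 : 0 ≤ q := by rw [hq]; positivity
  have hq1 : q ≤ 1 := by
    rw [hq]
    exact div_le_one_of_le₀ (by exact_mod_cast card_le_univ _) (by positivity)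
  have hanti (n : ℕ) : ∀ r, blockDens I n (r + 1) ≤ blockDens I n r := by
    induction n with
    | zero => exact h0
    | succ n ih =>
      intro r
      rw [blockDens_succ hI hq, blockDens_succ hI hq, Nat.add_sub_cancel]
      have hr0 : 0 ≤ q ^ r := by positivity
      have hr1 : q ^ r ≤ 1 := pow_le_one₀ hq0 hq1
      have hr : blockDens I n r ≤ blockDens I n (r - 1) := by
        cases r with
        | zero => rfl
        | succ r => exact ih r
      have h1 := mul_nonneg (sub_nonneg.2 hr1) (sub_nonneg.2 hr)
      have h2 := mul_nonneg (by positivity : 0 ≤ q ^ (r + 1) * q) (sub_nonneg.2 (ih (r + 1)))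
      rw [pow_succ] at h2 ⊢
      linarith
  refine ⟨hanti n r, ?_⟩
  rw [blockDens_succ hI hq]
  have := mul_nonneg hq0 (sub_nonneg.2 (hanti n 0))
  simp only [pow_zero]
  linarith

end Recursion

section Reduction

variable {R R' : Type*} [CommRing R] [Fintype R] [CommRing R'] [Fintype R']
  {ι : Type*} [Fintype ι]

theorem card_symFinset_comp {I : Ideal R} {S : ι → Prop} {I' : Ideal R'} {S' : ι → Prop}
    (φ : Matrix ι ι R →+ Matrix ι ι R')
    (hmap : ∀ M ∈ symFinset I S fun _ => True, φ M ∈ symFinset I' S' fun _ => True)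
    (hsurj : ∀ M' ∈ symFinset I' S' fun _ => True, ∃ M ∈ symFinset I S fun _ => True, φ M = M')
    (Φ : Matrix ι ι R' → Prop) :
    #(symFinset I S (Φ ∘ φ)) =
      #(symFinset I' S' Φ) * #(symFinset I S fun M => φ M = 0) := by
  classical
  rw [card_eq_sum_card_fiberwise (f := φ) (t := symFinset I' S' Φ), sum_const_nat]
  · intro M' hM'
    rw [mem_symFinset] at hM'
    obtain ⟨L, hL, rfl⟩ := hsurj M' (mem_symFinset.2 ⟨hM'.1, trivial⟩)
    rw [mem_symFinset] at hL
    refine card_nbij' (fun M => M - L) (fun M => M + L) ?_ ?_ ?_ ?_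
    · intro M hM
      simp only [coe_filter, Set.mem_ofPred_eq, SetLike.mem_coe, mem_symFinset] at hM ⊢
      exact ⟨⟨hM.1.1.1.sub hL.1.1,
        fun i j hi hj => I.sub_mem (hM.1.1.2 i j hi hj) (hL.1.2 i j hi hj)⟩, by simp [hM.2]⟩
    · intro M hM
      simp only [coe_filter, Set.mem_ofPred_eq, SetLike.mem_coe, mem_symFinset] at hM ⊢
      have h : φ (M + L) = φ L := by simp [hM.2]
      exact ⟨⟨⟨hM.1.1.add hL.1.1,
        fun i j hi hj => I.add_mem (hM.1.2 i j hi hj) (hL.1.2 i j hi hj)⟩,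
        by simpa [h] using hM'.2⟩, h⟩
    · intro M _; simp
    · intro M _; simp
  · intro M hM
    simp only [SetLike.mem_coe, mem_symFinset] at hM ⊢
    exact ⟨(mem_symFinset.1 (hmap M (mem_symFinset.2 ⟨hM.1, trivial⟩))).1, hM.2⟩

theorem symFinset_div_comp {I : Ideal R} {S : ι → Prop} {I' : Ideal R'} {S' : ι → Prop}
    (φ : Matrix ι ι R →+ Matrix ι ι R')
    (hmap : ∀ M ∈ symFinset I S fun _ => True, φ M ∈ symFinset I' S' fun _ => True)
    (hsurj : ∀ M' ∈ symFinset I' S' fun _ => True, ∃ M ∈ symFinset I S fun _ => True, φ M = M')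
    (Φ : Matrix ι ι R' → Prop) :
    (#(symFinset I S (Φ ∘ φ)) / #(symFinset I S fun _ => True) : ℝ) =
      #(symFinset I' S' Φ) / #(symFinset I' S' fun _ => True) := by
  have h := card_symFinset_comp φ hmap hsurj Φ
  have h' := card_symFinset_comp φ hmap hsurj fun _ => True
  have hpos := card_symFinset_true_pos I S
  have hpos' := card_symFinset_true_pos I' S'
  change #(symFinset I S fun _ => True) = _ at h'
  rw [h', Nat.pos_iff_ne_zero, mul_ne_zero_iff] at hpos
  rw [h, h']
  push_cast
  rw [mul_div_mul_right]
  exact_mod_cast hpos.2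

theorem symFinset_div_map (I : Ideal R) (I' : Ideal R') {f : R →+* R'}
    (hf : Function.Surjective f) (Φ : Matrix ι ι R' → Prop) :
    (#(symFinset I (fun _ : ι => False) fun M => Φ (M.map f)) /
        #(symFinset I (fun _ : ι => False) fun _ => True) : ℝ) =
      #(symFinset I' (fun _ : ι => False) Φ) /
        #(symFinset I' (fun _ : ι => False) fun _ => True) := by
  refine symFinset_div_comp (AddMonoidHom.mapMatrix f.toAddMonoidHom) ?_ ?_ Φ
  · intro M hM
    simp only [mem_symFinset] at hM ⊢
    exact ⟨⟨hM.1.1.map _, by simp⟩, trivial⟩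
  · intro M hM
    simp only [mem_symFinset] at hM ⊢
    refine ⟨M.map (Function.surjInv hf), ⟨⟨hM.1.1.map _, by simp⟩, trivial⟩, ?_⟩
    ext i j
    simp [Function.surjInv_eq hf]

theorem symDens_span_singleton [DecidableEq ι] (a : R) :
    symDens (Ideal.span {a}) (fun _ : ι => True) =
      #(symFinset (Ideal.span {a}) (fun _ : ι => False) fun M => a ^ Fintype.card ι * M.det ≠ 0) /
        #(symFinset (Ideal.span {a}) (fun _ : ι => False) fun _ => True) := by
  simp only [← det_smul]
  refine (symFinset_div_comp (DistribSMul.toAddMonoidHom (Matrix ι ι R) a) ?_ ?_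
    fun M => M.det ≠ 0).symm
  · intro M hM
    simp only [mem_symFinset] at hM ⊢
    refine ⟨⟨hM.1.1.smul a, fun i j _ _ => ?_⟩, trivial⟩
    exact Ideal.mem_span_singleton.2 ⟨M i j, rfl⟩
  · intro M hM
    simp only [mem_symFinset] at hM ⊢
    have h (x : R) : ∃ y, x ∈ Ideal.span {a} → a * y = x := by
      by_cases hx : x ∈ Ideal.span {a}
      · obtain ⟨y, rfl⟩ := Ideal.mem_span_singleton.1 hx
        exact ⟨y, fun _ => rfl⟩
      · exact ⟨0, fun h => absurd h hx⟩
    choose s hs using h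
    refine ⟨M.map s, ⟨⟨hM.1.1.map _, by simp⟩, trivial⟩, ?_⟩
    ext i j
    exact hs _ (hM.1.2 i j trivial trivial)

theorem card_symFinset_false (I : Ideal R) (n : ℕ) :
    #(symFinset I (fun _ : Fin n => False) fun _ => True) =
      Fintype.card R ^ (n * (n + 1) / 2) := by
  induction n with
  | zero =>
    have : symFinset I (fun _ : Fin 0 => False) (fun _ => True) = univ := by
      ext M
      simp [mem_symFinset, IsSymm, Subsingleton.elim Mᵀ M]
    rw [this]
    exact Fintype.card_eq_one_iff.2 ⟨0, fun _ => Subsingleton.elim _ _⟩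
  | succ n ih =>
    let e : Unit ⊕ Fin n ≃ Fin (n + 1) := Fintype.equivFinOfCardEq (by simp; ring)
    have hS : (fun _ : Fin (n + 1) => False) ∘ e =
        Sum.elim (fun _ : Unit => False) fun _ : Fin n => False := by
      ext (i | i) <;> simp
    rw [card_symFinset_reindex e, hS,
      card_symFinset_sum_unit (s := univ) _ _ _ _ (by simp)]
    have he : (n + 1) * (n + 1 + 1) / 2 = 1 + n + n * (n + 1) / 2 := by
      rw [show (n + 1) * (n + 1 + 1) = n * (n + 1) + (1 + n) * 2 by ring,
        Nat.add_mul_div_right _ _ two_pos, add_comm]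
    simp [ih, he, pow_add]

end Reduction

section ZMod

theorem Psym_eq_div (n m : ℕ) [NeZero m] (I : Ideal (ZMod m)) :
    Psym n m = #(symFinset I (fun _ : Fin n => False) fun M => M.det ≠ 0) /
      #(symFinset I (fun _ : Fin n => False) fun _ => True) := by
  rw [Psym, Nsym, card_symFinset_false, ZMod.card, Nat.cast_pow]
  congr 2
  rw [← Nat.card_eq_finsetCard]
  exact Nat.card_congr (Equiv.subtypeEquivRight fun M => by simp [mem_symFinset])

theorem Psym_eq_blockDens (n m : ℕ) [NeZero m] (I : Ideal (ZMod m)) :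
    Psym n m = blockDens I n 0 := by
  rw [Psym_eq_div n m I]
  exact symDens_eq_blockDens I (by simp) (by simp)

theorem Psym_le_of_dvd (n : ℕ) {m m' : ℕ} [NeZero m] [NeZero m'] (h : m ∣ m') :
    Psym n m ≤ Psym n m' := by
  have hf := ZMod.castHom_surjective h
  rw [Psym_eq_div n m ⊥, Psym_eq_div n m' ⊥, ← symFinset_div_map ⊥ ⊥ hf]
  gcongr
  intro M hM
  rw [mem_symFinset] at hM ⊢
  refine ⟨hM.1, fun h0 => hM.2 ?_⟩
  rw [← RingHom.mapMatrix_apply, ← RingHom.map_det, h0, map_zero]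

variable {p : ℕ}

theorem isUnit_of_notMem_span (hp : p.Prime) (μ : ℕ) (x : ZMod (p ^ μ))
    (hx : x ∉ Ideal.span {(p : ZMod (p ^ μ))}) : IsUnit x := by
  have : NeZero (p ^ μ) := ⟨pow_ne_zero _ hp.ne_zero⟩
  obtain ⟨v, rfl⟩ := ZMod.natCast_zmod_surjective x
  rw [ZMod.isUnit_iff_coprime]
  refine Nat.Coprime.pow_right _ ((hp.coprime_iff_not_dvd.2 fun ⟨k, hk⟩ => hx ?_).symm)
  exact Ideal.mem_span_singleton.2 ⟨k, by simp [hk]⟩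

theorem natCast_pow_mul_eq_zero_iff (hp : p.Prime) (μ r : ℕ) (x : ZMod (p ^ μ)) :
    (p : ZMod (p ^ μ)) ^ r * x = 0 ↔
      ZMod.castHom (pow_dvd_pow p (Nat.sub_le μ r)) (ZMod (p ^ (μ - r))) x = 0 := by
  have : NeZero (p ^ μ) := ⟨pow_ne_zero _ hp.ne_zero⟩
  obtain ⟨v, rfl⟩ := ZMod.natCast_zmod_surjective x
  rw [map_natCast, ← Nat.cast_pow, ← Nat.cast_mul, ZMod.natCast_eq_zero_iff,
    ZMod.natCast_eq_zero_iff]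
  rcases le_total r μ with h | h
  · obtain ⟨k, rfl⟩ := Nat.exists_eq_add_of_le h
    rw [pow_add, Nat.add_sub_cancel_left]
    exact Nat.mul_dvd_mul_iff_left (pow_pos hp.pos _)
  · simpa [Nat.sub_eq_zero_of_le h] using (pow_dvd_pow p h).mul_right v

theorem blockDens_zero_eq_Psym (hp : p.Prime) (μ r : ℕ) [NeZero (p ^ μ)] :
    blockDens (Ideal.span {(p : ZMod (p ^ μ))}) 0 r = Psym r (p ^ (μ - r)) := by
  have : NeZero (p ^ (μ - r)) := ⟨pow_ne_zero _ hp.ne_zero⟩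
  have hf := ZMod.castHom_surjective (pow_dvd_pow p (Nat.sub_le μ r))
  rw [← symDens_eq_blockDens (S := fun _ : Fin r => True) _ (by simp) (by simp),
    symDens_span_singleton, Psym_eq_div r _ ⊥, ← symFinset_div_map (Ideal.span {(p : ZMod (p ^ μ))}) ⊥ hf]
  simp only [Fintype.card_fin, ne_eq, natCast_pow_mul_eq_zero_iff hp,
    ← RingHom.mapMatrix_apply, ← RingHom.map_det]

theorem Psym_succ_le (hp : p.Prime) (μ : ℕ) : ∀ n, Psym (n + 1) (p ^ μ) ≤ Psym n (p ^ μ) := by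
  induction μ using Nat.strong_induction_on with
  | _ μ ih =>
    intro n
    have hne (k : ℕ) : NeZero (p ^ k) := ⟨pow_ne_zero _ hp.ne_zero⟩
    rcases Nat.eq_zero_or_pos μ with rfl | hμ
    · have h0 (k : ℕ) : Psym k (p ^ 0) = 0 := by
        have : Subsingleton (ZMod (p ^ 0)) := by rw [pow_zero]; infer_instance
        have : IsEmpty {A : Matrix (Fin k) (Fin k) (ZMod (p ^ 0)) // A.IsSymm ∧ A.det ≠ 0} :=
          ⟨fun A => A.2.2 (Subsingleton.elim _ _)⟩
        rw [Psym, Nsym, Nat.card_of_isEmpty, Nat.cast_zero, zero_div]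
      rw [h0, h0]
    · rw [Psym_eq_blockDens _ _ (Ideal.span {(p : ZMod (p ^ μ))}),
        Psym_eq_blockDens _ _ (Ideal.span {(p : ZMod (p ^ μ))})]
      refine (blockDens_antitone (isUnit_of_notMem_span hp μ) (fun r => ?_) n 0).2
      rw [blockDens_zero_eq_Psym hp, blockDens_zero_eq_Psym hp]
      exact (ih _ (by omega) r).trans (Psym_le_of_dvd r (pow_dvd_pow p (by omega)))

end ZMod

theorem Psym_monotone (p : ℕ) (hp : p.Prime) (n μ : ℕ) :
    Psym (n + 1) (p ^ μ) ≤ Psym n (p ^ μ) ∧ Psym n (p ^ μ) ≤ Psym n (p ^ (μ + 1)) := by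
  have hne (k : ℕ) : NeZero (p ^ k) := ⟨pow_ne_zero _ hp.ne_zero⟩
  exact ⟨Psym_succ_le hp μ n, Psym_le_of_dvd n (pow_dvd_pow p μ.le_succ)⟩
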